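/- arXiv:1511.04309 — 3 statements merged into one kernel-verified Lean document; each statement's English description precedes it below -/
import Mathlib

section
/- (Theorem 3 of the paper.) For every choice of angles α, β, γ ∈ R, the entangling circuit U_c(α,β,γ) = C₂₁ (1₂ ⊗ R_y(β)) C₁₂ (R_z(γ) ⊗ R_y(α)) C₂₁ leaves the mean phase synchronization fidelity over uniformly distributed pure product initial states equal to zero: (4π)⁻² ∫₀^{2π}dφ₁ ∫₀^{2π}dφ₂ ∫₀^π dθ₁ sin θ₁ ∫₀^π dθ₂ sin θ₂ · F(|ψ(θ₁,φ₁)⟩⟨ψ(θ₁,φ₁)| ⊗ |ψ(θ₂,φ₂)⟩⟨ψ(θ₂,φ₂)|, U_c(α,β,γ)) = 0. -/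
/-!
The mean vanishes because of a symmetry of the circuit. Pushing `Y ⊗ X` through the gates of `U_c`,

* `C₂₁ (Y ⊗ X) = (Z ⊗ Y) C₂₁`,
* `R_z(γ) ⊗ R_y(α)` commutes with `Z ⊗ Y`,
* `C₁₂ (Z ⊗ Y) = (1 ⊗ Y) C₁₂`,
* `1 ⊗ R_y(β)` commutes with `1 ⊗ Y`,
* `C₂₁ (1 ⊗ Y) = (X ⊗ Y) C₂₁`,

so `U_c (Y ⊗ X) = (X ⊗ Y) U_c` (`Uc_mul_YX`). On the input side, conjugation by `Y` on the first
qubit is `(θ₁, φ₁) ↦ (π - θ₁, π - φ₁)`, and conjugation by `X` on the second qubit is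
`(θ₂, φ₂) ↦ (π - θ₂, -φ₂)`; both preserve the uniform measure on the Bloch sphere. On the output
side, `X` acts on the first equatorial vector by `(x, y) ↦ (x, -y)` and `Y` on the second one by
`(x, y) ↦ (-x, y)`, so the inner product changes sign while the norms do not
(`phaseFid_conj_XY`, `PSF_reflect`). Hence the integral equals its own negative. The four substitutions
are made one variable at a time; they need only that the integrand is `2π`-periodic in `φ₁`, so
integrability plays no role.
-/

open Matrix Complex Real Kronecker
open scoped ComplexOrder

noncomputable section

/-- Pauli matrices -/
def pauliX : Matrix (Fin 2) (Fin 2) ℂ := !![0, 1; 1, 0]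
def pauliY : Matrix (Fin 2) (Fin 2) ℂ := !![0, -Complex.I; Complex.I, 0]
def pauliZ : Matrix (Fin 2) (Fin 2) ℂ := !![1, 0; 0, -1]

/-- partial trace over the second qubit -/
def ptrace2 (ρ : Matrix (Fin 2 × Fin 2) (Fin 2 × Fin 2) ℂ) : Matrix (Fin 2) (Fin 2) ℂ :=
  fun i j => ∑ k : Fin 2, ρ (i, k) (j, k)

/-- partial trace over the first qubit -/
def ptrace1 (ρ : Matrix (Fin 2 × Fin 2) (Fin 2 × Fin 2) ℂ) : Matrix (Fin 2) (Fin 2) ℂ :=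
  fun i j => ∑ k : Fin 2, ρ (k, i) (k, j)

/-- Bloch vector of a single-qubit state -/
def bloch (τ : Matrix (Fin 2) (Fin 2) ℂ) : Fin 3 → ℝ :=
  ![(Matrix.trace (pauliX * τ)).re, (Matrix.trace (pauliY * τ)).re,
    (Matrix.trace (pauliZ * τ)).re]

/-- projection of the Bloch vector into the xy-plane -/
def mvec (τ : Matrix (Fin 2) (Fin 2) ℂ) : Fin 2 → ℝ :=
  ![(Matrix.trace (pauliX * τ)).re, (Matrix.trace (pauliY * τ)).re]

def mdot (a b : Fin 2 → ℝ) : ℝ := a 0 * b 0 + a 1 * b 1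
def mnorm (a : Fin 2 → ℝ) : ℝ := Real.sqrt (a 0 ^ 2 + a 1 ^ 2)

/-- quantum-phase fidelity between two single-qubit states -/
def phaseFid (τ₁ τ₂ : Matrix (Fin 2) (Fin 2) ℂ) : ℝ :=
  mdot (mvec τ₁) (mvec τ₂) / (mnorm (mvec τ₁) * mnorm (mvec τ₂))

/-- phase synchronization fidelity of a two-qubit state ρ under a unitary U -/
def PSF (ρ U : Matrix (Fin 2 × Fin 2) (Fin 2 × Fin 2) ℂ) : ℝ :=
  phaseFid (ptrace2 (U * ρ * Uᴴ)) (ptrace1 (U * ρ * Uᴴ))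

/-- pure qubit state |ψ(θ,φ)⟩ = cos(θ/2)|0⟩ + e^{iφ} sin(θ/2)|1⟩ -/
def ψ (θ φ : ℝ) : Fin 2 → ℂ :=
  ![(Real.cos (θ / 2) : ℂ), Complex.exp (Complex.I * φ) * (Real.sin (θ / 2) : ℂ)]

/-- density matrix |v⟩⟨v| of a vector -/
def dm (v : Fin 2 → ℂ) : Matrix (Fin 2) (Fin 2) ℂ := Matrix.vecMulVec v (star v)

/-- CNOT with qubit 1 as control and qubit 2 as target -/
def CNOT12 : Matrix (Fin 2 × Fin 2) (Fin 2 × Fin 2) ℂ :=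
  fun i j => if i.1 = j.1 ∧ i.2 = j.2 + j.1 then 1 else 0

/-- CNOT with qubit 2 as control and qubit 1 as target -/
def CNOT21 : Matrix (Fin 2 × Fin 2) (Fin 2 × Fin 2) ℂ :=
  fun i j => if i.1 = j.1 + j.2 ∧ i.2 = j.2 then 1 else 0

/-- R_y(β) = exp(−i(β/2)σ_y) -/
def Ry (β : ℝ) : Matrix (Fin 2) (Fin 2) ℂ :=
  !![(Real.cos (β / 2) : ℂ), -(Real.sin (β / 2) : ℂ);
     (Real.sin (β / 2) : ℂ), (Real.cos (β / 2) : ℂ)]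

/-- R_z(γ) = exp(−i(γ/2)σ_z) -/
def Rz (γ : ℝ) : Matrix (Fin 2) (Fin 2) ℂ :=
  !![Complex.exp (-(Complex.I * γ / 2)), 0; 0, Complex.exp (Complex.I * γ / 2)]

/-- rotation operator R_n̂(α) = exp(−i(α/2) n̂·σ) (closed form, n̂ a unit axis) -/
def Raxis (n : Fin 3 → ℝ) (α : ℝ) : Matrix (Fin 2) (Fin 2) ℂ :=
  (Real.cos (α / 2) : ℂ) • (1 : Matrix (Fin 2) (Fin 2) ℂ) -
    (Complex.I * (Real.sin (α / 2) : ℂ)) •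
      ((n 0 : ℂ) • pauliX + (n 1 : ℂ) • pauliY + (n 2 : ℂ) • pauliZ)

/-- the SO(3) rotation by angle α about the unit axis n̂ (Rodrigues formula) -/
def rot3 (n : Fin 3 → ℝ) (α : ℝ) (v : Fin 3 → ℝ) : Fin 3 → ℝ :=
  Real.cos α • v + Real.sin α • (crossProduct n v) +
    ((1 - Real.cos α) * (n ⬝ᵥ v)) • n

/-- the entangling circuit U_c(α,β,γ) -/
def Uc (α β γ : ℝ) : Matrix (Fin 2 × Fin 2) (Fin 2 × Fin 2) ℂ :=
  CNOT21 * ((1 : Matrix (Fin 2) (Fin 2) ℂ) ⊗ₖ Ry β) * CNOT12 * (Rz γ ⊗ₖ Ry α) * CNOT21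

/-- the general two-qubit circuit U_g -/
def Ug (α β γ μ₁ μ₂ ν₁ ν₂ σ₁ : ℝ) : Matrix (Fin 2 × Fin 2) (Fin 2 × Fin 2) ℂ :=
  ((Rz σ₁ * Ry ν₁ * Rz μ₁) ⊗ₖ (Ry ν₂ * Rz μ₂)) * Uc α β γ

/-! ### The Pauli symmetry of the circuit -/

lemma CNOT21_mul_YX :
    CNOT21 * (pauliY ⊗ₖ pauliX) = (pauliZ ⊗ₖ pauliY) * CNOT21 := by
  ext ⟨i, j⟩ ⟨k, l⟩
  fin_cases i <;> fin_cases j <;> fin_cases k <;> fin_cases l <;>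
    simp [CNOT21, Matrix.mul_apply, Fintype.sum_prod_type, pauliX, pauliY, pauliZ]

lemma CNOT12_mul_ZY :
    CNOT12 * (pauliZ ⊗ₖ pauliY) = ((1 : Matrix (Fin 2) (Fin 2) ℂ) ⊗ₖ pauliY) * CNOT12 := by
  ext ⟨i, j⟩ ⟨k, l⟩
  fin_cases i <;> fin_cases j <;> fin_cases k <;> fin_cases l <;>
    simp [CNOT12, Matrix.mul_apply, Fintype.sum_prod_type, pauliY, pauliZ]

lemma CNOT21_mul_oneY :
    CNOT21 * ((1 : Matrix (Fin 2) (Fin 2) ℂ) ⊗ₖ pauliY) = (pauliX ⊗ₖ pauliY) * CNOT21 := by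
  ext ⟨i, j⟩ ⟨k, l⟩
  fin_cases i <;> fin_cases j <;> fin_cases k <;> fin_cases l <;>
    simp [CNOT21, Matrix.mul_apply, Fintype.sum_prod_type, pauliX, pauliY]

lemma Rz_mul_Z (γ : ℝ) : Rz γ * pauliZ = pauliZ * Rz γ := by
  ext i j
  fin_cases i <;> fin_cases j <;> simp [Rz, pauliZ, Matrix.mul_apply]

lemma Ry_mul_Y (β : ℝ) : Ry β * pauliY = pauliY * Ry β := by
  ext i j
  fin_cases i <;> fin_cases j <;> simp [Ry, pauliY, Matrix.mul_apply, mul_comm]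

lemma Uc_mul_YX (α β γ : ℝ) :
    Uc α β γ * (pauliY ⊗ₖ pauliX) = (pauliX ⊗ₖ pauliY) * Uc α β γ := by
  have h1 : (Rz γ ⊗ₖ Ry α) * (pauliZ ⊗ₖ pauliY) = (pauliZ ⊗ₖ pauliY) * (Rz γ ⊗ₖ Ry α) := by
    rw [← Matrix.mul_kronecker_mul, ← Matrix.mul_kronecker_mul, Rz_mul_Z, Ry_mul_Y]
  have h2 : ((1 : Matrix (Fin 2) (Fin 2) ℂ) ⊗ₖ Ry β) * ((1 : Matrix (Fin 2) (Fin 2) ℂ) ⊗ₖ pauliY)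
      = ((1 : Matrix (Fin 2) (Fin 2) ℂ) ⊗ₖ pauliY)
        * ((1 : Matrix (Fin 2) (Fin 2) ℂ) ⊗ₖ Ry β) := by
    rw [← Matrix.mul_kronecker_mul, ← Matrix.mul_kronecker_mul, Ry_mul_Y]
  unfold Uc
  rw [Matrix.mul_assoc _ CNOT21, CNOT21_mul_YX, ← Matrix.mul_assoc _ _ CNOT21,
    Matrix.mul_assoc _ _ (pauliZ ⊗ₖ pauliY), h1, ← Matrix.mul_assoc _ _ (Rz γ ⊗ₖ Ry α),
    Matrix.mul_assoc _ CNOT12, CNOT12_mul_ZY, ← Matrix.mul_assoc _ _ CNOT12,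
    Matrix.mul_assoc CNOT21 _ _, h2, ← Matrix.mul_assoc CNOT21, CNOT21_mul_oneY]
  simp only [Matrix.mul_assoc]

/-! ### Its action on input angles and on output Bloch vectors -/

lemma dm_conj (M : Matrix (Fin 2) (Fin 2) ℂ) (v : Fin 2 → ℂ) :
    M * dm v * Mᴴ = dm (M *ᵥ v) := by
  unfold dm
  rw [Matrix.mul_vecMulVec, Matrix.vecMulVec_mul, Matrix.star_mulVec]

/-- A global phase does not change the state. -/
lemma dm_smul (a : ℂ) (ha : a * star a = 1) (v : Fin 2 → ℂ) : dm (a • v) = dm v := by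
  unfold dm
  rw [star_smul, Matrix.smul_vecMulVec, Matrix.vecMulVec_smul, smul_smul, ha, one_smul]

lemma exp_mul_star (φ : ℝ) :
    Complex.exp (-(Complex.I * φ)) * star (Complex.exp (-(Complex.I * φ))) = 1 := by
  rw [Complex.star_def, ← Complex.exp_conj, ← Complex.exp_add]
  simp

lemma cos_half_reflect (θ : ℝ) : Real.cos ((π - θ) / 2) = Real.sin (θ / 2) := by
  rw [← Real.cos_pi_div_two_sub]; ring_nf

lemma sin_half_reflect (θ : ℝ) : Real.sin ((π - θ) / 2) = Real.cos (θ / 2) := by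
  rw [← Real.sin_pi_div_two_sub]; ring_nf

lemma exp_neg_mul_exp (φ : ℝ) :
    Complex.exp (-(Complex.I * φ)) * Complex.exp (Complex.I * φ) = 1 := by
  rw [← Complex.exp_add]; simp

/-- Conjugation by `Y` turns the Bloch vector `(x, y, z)` into `(-x, y, -z)`. On state vectors
the two sides agree up to the phase `i e^{-iφ}`. -/
lemma dm_reflect_Y (θ φ : ℝ) :
    dm (ψ (π - θ) (π - φ)) = pauliY * dm (ψ θ φ) * pauliYᴴ := by
  have he : Complex.exp (Complex.I * ((π - φ : ℝ) : ℂ)) = -Complex.exp (-(Complex.I * φ)) := by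
    rw [show Complex.I * ((π - φ : ℝ) : ℂ) = -(Complex.I * φ) + π * Complex.I by
      push_cast; ring, Complex.exp_add, Complex.exp_pi_mul_I]
    ring
  have hv : ψ (π - θ) (π - φ) =
      (Complex.I * Complex.exp (-(Complex.I * φ))) • (pauliY *ᵥ ψ θ φ) := by
    unfold ψ
    rw [cos_half_reflect, sin_half_reflect, he]
    have hu := exp_neg_mul_exp φ
    generalize Complex.exp (Complex.I * φ) = u at *
    generalize Complex.exp (-(Complex.I * φ)) = w at *
    ext i
    fin_cases i
    · simp [pauliY, -Complex.ofReal_sin, -Complex.ofReal_cos]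
      linear_combination (-(Real.sin (θ / 2) : ℂ)) * hu +
        (Real.sin (θ / 2) : ℂ) * w * u * Complex.I_sq
    · simp [pauliY, -Complex.ofReal_sin, -Complex.ofReal_cos]
      linear_combination (-(Real.cos (θ / 2) : ℂ)) * w * Complex.I_sq
  rw [dm_conj, hv, dm_smul]
  rw [star_mul', mul_mul_mul_comm, exp_mul_star]
  simp

/-- Conjugation by `X` turns the Bloch vector `(x, y, z)` into `(x, -y, -z)`. On state vectors
the two sides agree up to the phase `e^{-iφ}`. -/
lemma dm_reflect_X (θ φ : ℝ) :
    dm (ψ (π - θ) (2 * π - φ)) = pauliX * dm (ψ θ φ) * pauliXᴴ := by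
  have he : Complex.exp (Complex.I * ((2 * π - φ : ℝ) : ℂ)) = Complex.exp (-(Complex.I * φ)) := by
    rw [show Complex.I * ((2 * π - φ : ℝ) : ℂ) = -(Complex.I * φ) + 2 * π * Complex.I by
      push_cast; ring, Complex.exp_add, Complex.exp_two_pi_mul_I]
    ring
  have hv : ψ (π - θ) (2 * π - φ) = Complex.exp (-(Complex.I * φ)) • (pauliX *ᵥ ψ θ φ) := by
    unfold ψ
    rw [cos_half_reflect, sin_half_reflect, he]
    have hu := exp_neg_mul_exp φ
    generalize Complex.exp (Complex.I * φ) = u at *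
    generalize Complex.exp (-(Complex.I * φ)) = w at *
    ext i
    fin_cases i
    · simp [pauliX, -Complex.ofReal_sin, -Complex.ofReal_cos]
      linear_combination (-(Real.sin (θ / 2) : ℂ)) * hu
    · simp [pauliX, -Complex.ofReal_sin, -Complex.ofReal_cos]
  rw [dm_conj, hv, dm_smul _ (exp_mul_star φ)]

lemma mvec_eq (τ : Matrix (Fin 2) (Fin 2) ℂ) :
    mvec τ = ![(τ 1 0).re + (τ 0 1).re, (τ 1 0).im - (τ 0 1).im] := by
  unfold mvec pauliX pauliY
  rw [Matrix.trace_fin_two, Matrix.trace_fin_two]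
  simp [Matrix.mul_apply, Fin.sum_univ_two, sub_eq_add_neg]

lemma mvec_ptrace2_conj (σ : Matrix (Fin 2 × Fin 2) (Fin 2 × Fin 2) ℂ) :
    mvec (ptrace2 ((pauliX ⊗ₖ pauliY) * σ * (pauliX ⊗ₖ pauliY)ᴴ)) =
      ![mvec (ptrace2 σ) 0, -mvec (ptrace2 σ) 1] := by
  ext i
  fin_cases i <;>
    simp [mvec_eq, ptrace2, pauliX, pauliY, Matrix.mul_apply, Fintype.sum_prod_type] <;>
    ring

lemma mvec_ptrace1_conj (σ : Matrix (Fin 2 × Fin 2) (Fin 2 × Fin 2) ℂ) :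
    mvec (ptrace1 ((pauliX ⊗ₖ pauliY) * σ * (pauliX ⊗ₖ pauliY)ᴴ)) =
      ![-mvec (ptrace1 σ) 0, mvec (ptrace1 σ) 1] := by
  ext i
  fin_cases i <;>
    simp [mvec_eq, ptrace1, pauliX, pauliY, Matrix.mul_apply, Fintype.sum_prod_type] <;>
    ring

/-- `X ⊗ Y` reflects the two equatorial vectors in perpendicular axes, so their inner product changes
sign. Where a norm vanishes, both sides are `0` by the convention for division. -/
lemma phaseFid_conj_XY (σ : Matrix (Fin 2 × Fin 2) (Fin 2 × Fin 2) ℂ) :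
    phaseFid (ptrace2 ((pauliX ⊗ₖ pauliY) * σ * (pauliX ⊗ₖ pauliY)ᴴ))
        (ptrace1 ((pauliX ⊗ₖ pauliY) * σ * (pauliX ⊗ₖ pauliY)ᴴ)) =
      -phaseFid (ptrace2 σ) (ptrace1 σ) := by
  unfold phaseFid
  rw [mvec_ptrace2_conj, mvec_ptrace1_conj]
  simp only [mdot, mnorm, Matrix.cons_val_zero, Matrix.cons_val_one, neg_sq]
  ring

lemma PSF_reflect (α β γ θ₁ θ₂ φ₁ φ₂ : ℝ) :
    PSF (dm (ψ (π - θ₁) (π - φ₁)) ⊗ₖ dm (ψ (π - θ₂) (2 * π - φ₂))) (Uc α β γ) =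
      -PSF (dm (ψ θ₁ φ₁) ⊗ₖ dm (ψ θ₂ φ₂)) (Uc α β γ) := by
  set ρ := dm (ψ θ₁ φ₁) ⊗ₖ dm (ψ θ₂ φ₂)
  have hρ : dm (ψ (π - θ₁) (π - φ₁)) ⊗ₖ dm (ψ (π - θ₂) (2 * π - φ₂)) =
      (pauliY ⊗ₖ pauliX) * ρ * (pauliY ⊗ₖ pauliX)ᴴ := by
    rw [dm_reflect_Y, dm_reflect_X, Matrix.mul_kronecker_mul, Matrix.mul_kronecker_mul,
      Matrix.conjTranspose_kronecker]
  have hU : Uc α β γ * ((pauliY ⊗ₖ pauliX) * ρ * (pauliY ⊗ₖ pauliX)ᴴ) * (Uc α β γ)ᴴ =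
      (pauliX ⊗ₖ pauliY) * (Uc α β γ * ρ * (Uc α β γ)ᴴ) * (pauliX ⊗ₖ pauliY)ᴴ := by
    calc _ = (Uc α β γ * (pauliY ⊗ₖ pauliX)) * ρ * (Uc α β γ * (pauliY ⊗ₖ pauliX))ᴴ := by
          rw [Matrix.conjTranspose_mul]; simp only [Matrix.mul_assoc]
      _ = _ := by
          rw [Uc_mul_YX, Matrix.conjTranspose_mul]; simp only [Matrix.mul_assoc]
  unfold PSF
  rw [hρ, hU, phaseFid_conj_XY]

/-! ### Integration over the angles -/

lemma ψ_periodic (θ φ : ℝ) : ψ θ (φ + 2 * π) = ψ θ φ := by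
  unfold ψ
  rw [show Complex.I * ((φ + 2 * π : ℝ) : ℂ) = Complex.I * φ + 2 * π * Complex.I by
    push_cast; ring, Complex.exp_add, Complex.exp_two_pi_mul_I, mul_one]

/-- Averaging over a full period is invariant under `φ ↦ π - φ`. -/
lemma integral_reflect_periodic (f : ℝ → ℝ) (hf : Function.Periodic f (2 * π)) :
    ∫ φ in (0 : ℝ)..(2 * π), f (π - φ) = ∫ φ in (0 : ℝ)..(2 * π), f φ := by
  rw [intervalIntegral.integral_comp_sub_left f π]
  have h := hf.intervalIntegral_add_eq (π - 2 * π) 0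
  rw [zero_add] at h
  rw [← h]
  congr 1
  ring

/-- Theorem 3: the entangling circuit U_c leaves the mean phase
synchronization fidelity over pure product initial states equal to zero. -/
theorem uc_mean_psf_zero (α β γ : ℝ) :
    ((4 * π) ^ 2)⁻¹ *
        ∫ φ₁ in (0 : ℝ)..(2 * π), ∫ φ₂ in (0 : ℝ)..(2 * π),
          ∫ θ₁ in (0 : ℝ)..π, ∫ θ₂ in (0 : ℝ)..π,
            Real.sin θ₁ * Real.sin θ₂ *
              PSF (dm (ψ θ₁ φ₁) ⊗ₖ dm (ψ θ₂ φ₂)) (Uc α β γ) = 0 := by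
  -- The substitution is `(φ₁, φ₂, θ₁, θ₂) ↦ (π - φ₁, 2π - φ₂, π - θ₁, π - θ₂)`; only in `φ₁` does it
  -- move the interval of integration, and there periodicity is needed.
  set G : ℝ → ℝ → ℝ → ℝ → ℝ := fun φ₁ φ₂ θ₁ θ₂ => Real.sin θ₁ * Real.sin θ₂ *
    PSF (dm (ψ θ₁ φ₁) ⊗ₖ dm (ψ θ₂ φ₂)) (Uc α β γ) with hG
  have hneg : ∀ φ₁ φ₂ θ₁ θ₂, G (π - φ₁) (2 * π - φ₂) (π - θ₁) (π - θ₂) = -G φ₁ φ₂ θ₁ θ₂ := by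
    intro φ₁ φ₂ θ₁ θ₂
    simp only [hG, PSF_reflect, Real.sin_pi_sub]
    ring
  have hrefl : ∀ (a : ℝ) (f : ℝ → ℝ), ∫ x in (0 : ℝ)..a, f x = ∫ x in (0 : ℝ)..a, f (a - x) := by
    intro a f
    rw [intervalIntegral.integral_comp_sub_left f a]
    simp
  have hθ : ∀ φ₁ φ₂, ∫ θ₁ in (0 : ℝ)..π, ∫ θ₂ in (0 : ℝ)..π, G (π - φ₁) (2 * π - φ₂) θ₁ θ₂ =
      -∫ θ₁ in (0 : ℝ)..π, ∫ θ₂ in (0 : ℝ)..π, G φ₁ φ₂ θ₁ θ₂ := by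
    intro φ₁ φ₂
    rw [hrefl, ← intervalIntegral.integral_neg]
    congr 1 with θ₁
    rw [hrefl, ← intervalIntegral.integral_neg]
    simp only [hneg]
  have hφ₂ : ∀ φ₁, ∫ φ₂ in (0 : ℝ)..(2 * π),
        ∫ θ₁ in (0 : ℝ)..π, ∫ θ₂ in (0 : ℝ)..π, G (π - φ₁) φ₂ θ₁ θ₂ =
      -∫ φ₂ in (0 : ℝ)..(2 * π), ∫ θ₁ in (0 : ℝ)..π, ∫ θ₂ in (0 : ℝ)..π, G φ₁ φ₂ θ₁ θ₂ := by
    intro φ₁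
    rw [hrefl, ← intervalIntegral.integral_neg]
    simp only [hθ]
  have hφ₁ := integral_reflect_periodic (fun φ₁ => ∫ φ₂ in (0 : ℝ)..(2 * π),
      ∫ θ₁ in (0 : ℝ)..π, ∫ θ₂ in (0 : ℝ)..π, G φ₁ φ₂ θ₁ θ₂)
    (fun φ₁ => by simp only [hG, ψ_periodic])
  simp only [hφ₂, intervalIntegral.integral_neg] at hφ₁
  have h0 : ∫ φ₁ in (0 : ℝ)..(2 * π), ∫ φ₂ in (0 : ℝ)..(2 * π),
      ∫ θ₁ in (0 : ℝ)..π, ∫ θ₂ in (0 : ℝ)..π, G φ₁ φ₂ θ₁ θ₂ = 0 := by linarith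
  rw [h0, mul_zero]

end
end

section
/- (Appendix Lemma on m₁.) For every fixed parameter tuple σ = (α,β,γ,μ₁,μ₂,ν₁,ν₂,σ₁) ∈ R⁸ of the general two-qubit unitary U_g(σ) = ((R_z(σ₁)R_y(ν₁)R_z(μ₁)) ⊗ (R_y(ν₂)R_z(μ₂))) U_c(α,β,γ), the set of initial parameters (θ₁,φ₁,θ₂,φ₂) ∈ [0,π]×[0,2π]×[0,π]×[0,2π] for which the first final reduced Bloch vector of U_g(σ)(|ψ(θ₁,φ₁)⟩⟨ψ(θ₁,φ₁)| ⊗ |ψ(θ₂,φ₂)⟩⟨ψ(θ₂,φ₂)|)U_g(σ)† has vanishing projection into the xy-plane has Lebesgue measure zero in R⁴. -/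
/-!
The `x`-component of the first reduced Bloch vector of `U ρ U†` is `tr (A ρ)` with
`A = U† (σ_x ⊗ 1) U`. For `U` unitary, `A` is Hermitian and non-zero.

On product states `tr (A ρ)` is a real-analytic function of the four angles. It does not vanish
identically, because the density matrices `|ψ(θ,φ)⟩⟨ψ(θ,φ)|` span all `2 × 2` matrices, so that
their Kronecker products span all `4 × 4` matrices (`eq_zero_of_sum_mul_dm`,
`eq_zero_of_trace_mul_kronecker_dm`). The zero set of a non-zero real-analytic function is
Lebesgue-null; on `ℝ × ℝ × ℝ × ℝ` this follows from the isolation of zeros in one variable and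
Fubini's theorem (`AnalyticNull.real`, `AnalyticNull.prod`). The condition on the `x`-component
alone therefore already cuts out a null set.
-/

open Matrix Complex Real Kronecker
open scoped ComplexOrder

noncomputable section

open scoped ContDiff

/-- Zero sets of real-analytic functions on `E` that are not identically zero are null.
Analyticity on all of `E` is expressed as `ContDiff ℝ ω`. -/
def AnalyticNull (E : Type*) [NormedAddCommGroup E] [NormedSpace ℝ E]
    [MeasureTheory.MeasureSpace E] : Prop :=
  ∀ f : E → ℝ, ContDiff ℝ ω f → (∃ x, f x ≠ 0) → MeasureTheory.volume {x | f x = 0} = 0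

lemma AnalyticNull.real : AnalyticNull ℝ := by
  intro f hf ⟨x, hx⟩
  have hf' : AnalyticOnNhd ℝ f Set.univ := contDiff_omega_iff_analyticOnNhd.1 hf
  rcases hf'.eqOn_zero_or_eventually_ne_zero_of_preconnected isPreconnected_univ with h | h
  · exact absurd (h (Set.mem_univ x)) hx
  · have := ae_restrict_le_codiscreteWithin (μ := MeasureTheory.volume) MeasurableSet.univ h
    rw [MeasureTheory.Measure.restrict_univ] at this
    simpa [MeasureTheory.mem_ae_iff, Set.compl_def] using! this

/-- If `f (x₀, y₀) ≠ 0`, then `f (x, y₀) ≠ 0` for almost every `x`, and for each such `x` the slice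
`f (x, ·)` is a non-zero analytic function on `E`. -/
lemma AnalyticNull.prod {E : Type*} [NormedAddCommGroup E] [NormedSpace ℝ E]
    [MeasureTheory.MeasureSpace E] [SecondCountableTopology E] [BorelSpace E]
    [MeasureTheory.SFinite (MeasureTheory.volume : MeasureTheory.Measure E)]
    (hE : AnalyticNull E) : AnalyticNull (ℝ × E) := by
  intro f hf ⟨⟨x₀, y₀⟩, h₀⟩
  have hm : MeasurableSet {x | f x = 0} := (isClosed_eq hf.continuous continuous_const).measurableSet
  rw [MeasureTheory.Measure.volume_eq_prod, MeasureTheory.Measure.measure_prod_null hm]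
  have h1 : MeasureTheory.volume {x | f (x, y₀) = 0} = 0 :=
    AnalyticNull.real _ (hf.comp (contDiff_id.prodMk contDiff_const)) ⟨x₀, h₀⟩
  have h2 : ∀ᵐ x, f (x, y₀) ≠ 0 := by
    simpa [MeasureTheory.ae_iff] using h1
  filter_upwards [h2] with x hx
  exact hE (fun y => f (x, y)) (hf.comp (contDiff_const.prodMk contDiff_id)) ⟨y₀, hx⟩

lemma contDiff_ψ {E : Type*} [NormedAddCommGroup E] [NormedSpace ℝ E] {f g : E → ℝ}
    (hf : ContDiff ℝ ω f) (hg : ContDiff ℝ ω g) (i : Fin 2) :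
    ContDiff ℝ ω fun x => ψ (f x) (g x) i := by
  have hof : ∀ {h : E → ℝ}, ContDiff ℝ ω h → ContDiff ℝ ω fun x => (h x : ℂ) :=
    fun hh => Complex.ofRealCLM.contDiff.comp hh
  fin_cases i
  · exact hof (Real.contDiff_cos.comp (hf.div_const 2))
  · exact (contDiff_const.mul (hof hg)).cexp.mul (hof (Real.contDiff_sin.comp (hf.div_const 2)))

lemma contDiff_dm {E : Type*} [NormedAddCommGroup E] [NormedSpace ℝ E] {f g : E → ℝ}
    (hf : ContDiff ℝ ω f) (hg : ContDiff ℝ ω g) (i j : Fin 2) :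
    ContDiff ℝ ω fun x => dm (ψ (f x) (g x)) i j :=
  (contDiff_ψ hf hg i).mul (Complex.conjCLE.contDiff.comp (contDiff_ψ hf hg j))

/-- The pure-state density matrices span all `2 × 2` matrices: a linear functional, with
coefficients `g`, that vanishes on all of them is zero. -/
lemma eq_zero_of_sum_mul_dm (g : Fin 2 → Fin 2 → ℂ)
    (h : ∀ θ φ, ∑ i, ∑ j, g i j * dm (ψ θ φ) i j = 0) : g = 0 := by
  -- The states `|0⟩`, `|1⟩`, `|+⟩`, `|+i⟩` already span.
  have h0 := h 0 0
  have h1 := h π 0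
  have h2 := h (π / 2) 0
  have h3 := h (π / 2) (π / 2)
  have e : Complex.exp (Complex.I * (π / 2)) = Complex.I := by
    rw [mul_comm]; exact Complex.exp_pi_div_two_mul_I
  have hc : Real.cos (π / 2 / 2) = √2 / 2 := by rw [← Real.cos_pi_div_four]; ring_nf
  have hs : Real.sin (π / 2 / 2) = √2 / 2 := by rw [← Real.sin_pi_div_four]; ring_nf
  have hq : ((√2 : ℝ) : ℂ) * ((√2 : ℝ) : ℂ) = 2 := by
    rw [← Complex.ofReal_mul, Real.mul_self_sqrt (by norm_num)]; norm_num
  simp only [Fin.sum_univ_two, dm, Matrix.vecMulVec_apply, ψ, Pi.star_apply, hc, hs,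
    Matrix.cons_val_zero, Matrix.cons_val_one, RCLike.star_def, map_mul, map_div₀,
    map_zero, map_ofNat, Complex.conj_ofReal,
    Complex.ofReal_div, Complex.ofReal_ofNat, e, Complex.conj_I,
    Complex.ofReal_zero, mul_zero, Complex.exp_zero, map_one, zero_div, Real.cos_zero,
    Real.sin_zero, Complex.ofReal_one, Real.cos_pi_div_two, Real.sin_pi_div_two,
    one_mul, mul_one, add_zero, zero_add] at h0 h1 h2 h3
  have a : g 0 1 + g 1 0 = 0 := by linear_combination 2 * h2 - h0 - h1 -
    (g 0 0 + g 0 1 + g 1 0 + g 1 1) / 2 * hq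
  have b : -Complex.I * g 0 1 + Complex.I * g 1 0 = 0 := by
    linear_combination 2 * h3 - h0 - h1 -
      (g 0 0 - Complex.I * g 0 1 + Complex.I * g 1 0 - Complex.I ^ 2 * g 1 1) / 2 * hq
      + g 1 1 * Complex.I_sq
  have c : g 0 1 = 0 := by
    linear_combination a / 2 + Complex.I / 2 * b + (g 0 1 - g 1 0) / 2 * Complex.I_sq
  have d : g 1 0 = 0 := by linear_combination a - c
  ext i j
  fin_cases i <;> fin_cases j
  exacts [h0, c, d, h1]

lemma trace_mul_kronecker_dm (A : Matrix (Fin 2 × Fin 2) (Fin 2 × Fin 2) ℂ)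
    (D D' : Matrix (Fin 2) (Fin 2) ℂ) :
    (A * (D ⊗ₖ D')).trace = ∑ i, ∑ j, (∑ k, ∑ l, A (j, l) (i, k) * D' k l) * D i j := by
  simp only [Matrix.trace, Matrix.diag, Matrix.mul_apply, Matrix.kroneckerMap_apply,
    Fintype.sum_prod_type, Fin.sum_univ_two]
  ring

lemma eq_zero_of_trace_mul_kronecker_dm (A : Matrix (Fin 2 × Fin 2) (Fin 2 × Fin 2) ℂ)
    (h : ∀ θ φ θ' φ', (A * (dm (ψ θ φ) ⊗ₖ dm (ψ θ' φ'))).trace = 0) : A = 0 := by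
  ext ⟨j, l⟩ ⟨i, k⟩
  have h1 : ∀ θ' φ', ∑ k, ∑ l, A (j, l) (i, k) * dm (ψ θ' φ') k l = 0 := fun θ' φ' =>
    congrFun (congrFun (eq_zero_of_sum_mul_dm
      (fun i j => ∑ k, ∑ l, A (j, l) (i, k) * dm (ψ θ' φ') k l)
      fun θ φ => by rw [← trace_mul_kronecker_dm, h]) i) j
  exact congrFun (congrFun (eq_zero_of_sum_mul_dm (fun k l => A (j, l) (i, k)) h1) k) l

lemma dm_isHermitian (v : Fin 2 → ℂ) : (dm v).IsHermitian := by
  simp [Matrix.IsHermitian, dm, Matrix.conjTranspose_vecMulVec]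

lemma pauliX_isHermitian : pauliX.IsHermitian := by
  ext i j
  fin_cases i <;> fin_cases j <;> simp [pauliX]

/-- The trace of a product of two Hermitian matrices is real. -/
lemma trace_mul_im_eq_zero {n : Type*} [Fintype n] {A B : Matrix n n ℂ} (hA : A.IsHermitian)
    (hB : B.IsHermitian) : (A * B).trace.im = 0 := by
  rw [← Complex.conj_eq_iff_im, starRingEnd_apply, ← Matrix.trace_conjTranspose,
    Matrix.conjTranspose_mul, hA.eq, hB.eq, Matrix.trace_mul_comm]

/-- The partial trace is dual to tensoring an observable with the identity. -/
lemma trace_mul_ptrace2 (P : Matrix (Fin 2) (Fin 2) ℂ)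
    (ρ : Matrix (Fin 2 × Fin 2) (Fin 2 × Fin 2) ℂ) :
    (P * ptrace2 ρ).trace = ((P ⊗ₖ (1 : Matrix (Fin 2) (Fin 2) ℂ)) * ρ).trace := by
  simp [Matrix.trace, Matrix.mul_apply, Matrix.kroneckerMap_apply, ptrace2,
    Fintype.sum_prod_type, Fin.sum_univ_two, Matrix.one_apply]
  ring

/-- The Heisenberg-picture observable `U† (σ_x ⊗ 1) U`. -/
def obsX (U : Matrix (Fin 2 × Fin 2) (Fin 2 × Fin 2) ℂ) :
    Matrix (Fin 2 × Fin 2) (Fin 2 × Fin 2) ℂ :=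
  Uᴴ * (pauliX ⊗ₖ (1 : Matrix (Fin 2) (Fin 2) ℂ)) * U

lemma trace_pauliX_mul_ptrace2 (U ρ : Matrix (Fin 2 × Fin 2) (Fin 2 × Fin 2) ℂ) :
    (pauliX * ptrace2 (U * ρ * Uᴴ)).trace = (obsX U * ρ).trace := by
  rw [trace_mul_ptrace2, obsX, ← Matrix.mul_assoc, Matrix.trace_mul_comm]
  simp only [Matrix.mul_assoc]

lemma obsX_isHermitian (U : Matrix (Fin 2 × Fin 2) (Fin 2 × Fin 2) ℂ) :
    (obsX U).IsHermitian := by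
  have : (pauliX ⊗ₖ (1 : Matrix (Fin 2) (Fin 2) ℂ)).IsHermitian := by
    rw [Matrix.IsHermitian, Matrix.conjTranspose_kronecker, pauliX_isHermitian.eq,
      Matrix.conjTranspose_one]
  exact Matrix.isHermitian_conjTranspose_mul_mul U this

lemma obsX_ne_zero {U : Matrix (Fin 2 × Fin 2) (Fin 2 × Fin 2) ℂ}
    (hU : U ∈ Matrix.unitaryGroup (Fin 2 × Fin 2) ℂ) : obsX U ≠ 0 := by
  intro h
  have hU' : U * Uᴴ = 1 := Matrix.mem_unitaryGroup_iff.1 hU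
  have h1 : U * obsX U * Uᴴ = pauliX ⊗ₖ (1 : Matrix (Fin 2) (Fin 2) ℂ) := by
    calc U * obsX U * Uᴴ = (U * Uᴴ) * (pauliX ⊗ₖ (1 : Matrix (Fin 2) (Fin 2) ℂ)) * (U * Uᴴ) := by
          simp only [obsX, Matrix.mul_assoc]
      _ = _ := by rw [hU', Matrix.one_mul, Matrix.mul_one]
  rw [h, Matrix.mul_zero, Matrix.zero_mul] at h1
  have := congrFun (congrFun h1 (0, 0)) (1, 0)
  simp [pauliX] at this

lemma Ry_mem (β : ℝ) : Ry β ∈ Matrix.unitaryGroup (Fin 2) ℂ := by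
  have h : (Real.cos (β / 2) : ℂ) * Real.cos (β / 2) + Real.sin (β / 2) * Real.sin (β / 2) = 1 := by
    rw [← Complex.ofReal_mul, ← Complex.ofReal_mul, ← Complex.ofReal_add, ← sq, ← sq,
      Real.cos_sq_add_sin_sq, Complex.ofReal_one]
  rw [Matrix.mem_unitaryGroup_iff]
  ext i j
  fin_cases i <;> fin_cases j <;>
    simp only [Ry, Matrix.star_eq_conjTranspose, Matrix.mul_apply, Fin.sum_univ_two,
      Matrix.conjTranspose_apply, Matrix.of_apply, Matrix.cons_val', Matrix.cons_val_zero,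
      Matrix.cons_val_one, Matrix.cons_val_fin_one, Fin.zero_eta, Fin.mk_one, Fin.isValue,
      RCLike.star_def, map_neg, Complex.conj_ofReal, Matrix.one_apply, if_true, zero_ne_one,
      one_ne_zero, if_false]
  · linear_combination h
  · ring
  · ring
  · linear_combination h

lemma Rz_mem (γ : ℝ) : Rz γ ∈ Matrix.unitaryGroup (Fin 2) ℂ := by
  rw [Matrix.mem_unitaryGroup_iff]
  ext i j
  fin_cases i <;> fin_cases j <;>
    simp [Rz, Matrix.star_eq_conjTranspose, Matrix.mul_apply, Fin.sum_univ_two,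
      ← Complex.exp_conj, ← Complex.exp_add, map_ofNat, neg_div]

lemma CNOT12_mem : CNOT12 ∈ Matrix.unitaryGroup (Fin 2 × Fin 2) ℂ := by
  rw [Matrix.mem_unitaryGroup_iff]
  ext ⟨i, i'⟩ ⟨j, j'⟩
  fin_cases i <;> fin_cases i' <;> fin_cases j <;> fin_cases j' <;>
    simp [CNOT12, Matrix.star_eq_conjTranspose, Matrix.mul_apply, Fintype.sum_prod_type,
      Fin.sum_univ_two]

lemma CNOT21_mem : CNOT21 ∈ Matrix.unitaryGroup (Fin 2 × Fin 2) ℂ := by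
  rw [Matrix.mem_unitaryGroup_iff]
  ext ⟨i, i'⟩ ⟨j, j'⟩
  fin_cases i <;> fin_cases i' <;> fin_cases j <;> fin_cases j' <;>
    simp [CNOT21, Matrix.star_eq_conjTranspose, Matrix.mul_apply, Fintype.sum_prod_type,
      Fin.sum_univ_two]

lemma Ug_mem (α β γ μ₁ μ₂ ν₁ ν₂ σ₁ : ℝ) :
    Ug α β γ μ₁ μ₂ ν₁ ν₂ σ₁ ∈ Matrix.unitaryGroup (Fin 2 × Fin 2) ℂ := by
  refine mul_mem (Matrix.kronecker_mem_unitary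
    (mul_mem (mul_mem (Rz_mem _) (Ry_mem _)) (Rz_mem _)) (mul_mem (Ry_mem _) (Rz_mem _))) ?_
  exact mul_mem (mul_mem (mul_mem (mul_mem CNOT21_mem
    (Matrix.kronecker_mem_unitary (one_mem _) (Ry_mem _))) CNOT12_mem)
    (Matrix.kronecker_mem_unitary (Rz_mem _) (Ry_mem _))) CNOT21_mem

/-- Appendix Lemma on m₁: for every parameter tuple of U_g, the
set of initial angles for which the first final reduced Bloch vector has
vanishing xy-projection has Lebesgue measure zero. -/
theorem m1_vanishing_measure_zero (α β γ μ₁ μ₂ ν₁ ν₂ σ₁ : ℝ) :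
    MeasureTheory.volume {q : ℝ × ℝ × ℝ × ℝ |
      q.1 ∈ Set.Icc 0 π ∧ q.2.1 ∈ Set.Icc 0 (2 * π) ∧
      q.2.2.1 ∈ Set.Icc 0 π ∧ q.2.2.2 ∈ Set.Icc 0 (2 * π) ∧
      mvec (ptrace2 (Ug α β γ μ₁ μ₂ ν₁ ν₂ σ₁ *
          (dm (ψ q.1 q.2.1) ⊗ₖ dm (ψ q.2.2.1 q.2.2.2)) *
          (Ug α β γ μ₁ μ₂ ν₁ ν₂ σ₁)ᴴ)) = 0} = 0 := by
  set U := Ug α β γ μ₁ μ₂ ν₁ ν₂ σ₁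
  have hU : U ∈ Matrix.unitaryGroup (Fin 2 × Fin 2) ℂ := Ug_mem ..
  let f : ℝ × ℝ × ℝ × ℝ → ℝ := fun q =>
    (obsX U * (dm (ψ q.1 q.2.1) ⊗ₖ dm (ψ q.2.2.1 q.2.2.2))).trace.re
  have hf : ContDiff ℝ ω f := by
    have hd₁ : ∀ i j, ContDiff ℝ ω fun q : ℝ × ℝ × ℝ × ℝ => dm (ψ q.1 q.2.1) i j :=
      contDiff_dm (by fun_prop) (by fun_prop)
    have hd₂ : ∀ i j, ContDiff ℝ ω fun q : ℝ × ℝ × ℝ × ℝ => dm (ψ q.2.2.1 q.2.2.2) i j :=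
      contDiff_dm (by fun_prop) (by fun_prop)
    have hs : ContDiff ℝ ω fun q : ℝ × ℝ × ℝ × ℝ =>
        (obsX U * (dm (ψ q.1 q.2.1) ⊗ₖ dm (ψ q.2.2.1 q.2.2.2))).trace := by
      simp only [trace_mul_kronecker_dm]
      refine ContDiff.sum fun i _ => ContDiff.sum fun j _ => ContDiff.mul ?_ (hd₁ i j)
      exact ContDiff.sum fun k _ => ContDiff.sum fun l _ => contDiff_const.mul (hd₂ k l)
    exact Complex.reCLM.contDiff.comp hs
  have hne : ∃ q, f q ≠ 0 := by
    by_contra! h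
    refine obsX_ne_zero hU (eq_zero_of_trace_mul_kronecker_dm _ fun θ φ θ' φ' => ?_)
    refine Complex.ext (h (θ, φ, θ', φ')) (trace_mul_im_eq_zero (obsX_isHermitian U) ?_)
    rw [Matrix.IsHermitian, Matrix.conjTranspose_kronecker, (dm_isHermitian _).eq,
      (dm_isHermitian _).eq]
  refine MeasureTheory.measure_mono_null ?_
    (AnalyticNull.real.prod.prod.prod f hf hne)
  rintro q ⟨-, -, -, -, hq⟩
  have hx := congrFun hq 0
  simp only [mvec, Matrix.cons_val_zero, trace_pauliX_mul_ptrace2] at hx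
  exact hx

end
end

section
/- (Appendix Lemma on m₂.) For every fixed parameter tuple σ = (α,β,γ,μ₁,μ₂,ν₁,ν₂,σ₁) ∈ R⁸ of the general two-qubit unitary U_g(σ) = ((R_z(σ₁)R_y(ν₁)R_z(μ₁)) ⊗ (R_y(ν₂)R_z(μ₂))) U_c(α,β,γ), the set of initial parameters (θ₁,φ₁,θ₂,φ₂) ∈ [0,π]×[0,2π]×[0,π]×[0,2π] for which the second final reduced Bloch vector of U_g(σ)(|ψ(θ₁,φ₁)⟩⟨ψ(θ₁,φ₁)| ⊗ |ψ(θ₂,φ₂)⟩⟨ψ(θ₂,φ₂)|)U_g(σ)† has vanishing projection into the xy-plane has Lebesgue measure zero in R⁴. -/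
/-!
Conjugation by a unitary `U` followed by a partial trace is linear, and for a Hermitian state the
vanishing of the `xy`-projection means that the off-diagonal entry `(tr₁ (U ρ U†))₁₀` vanishes. That
entry is a complex linear functional of `ρ`, and it is not the zero functional because conjugation
by `U` is onto (`entryFunctional_ne_zero`). No other feature of the circuit matters: the zero set of
any nonzero linear functional on pure product states is null (`volume_product_zeros`).

For one qubit, such a functional is a trigonometric polynomial of degree one in each of the two
angles, with coefficients that determine it, and a nonzero trigonometric polynomial in one
variable is almost everywhere nonzero by analyticity (`ae_sum_mul_dm_ψ_ne_zero`). For two qubits,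
contracting the functional with almost any first state leaves a nonzero functional of the second
state, and Tonelli's theorem on the closed zero set turns these iterated almost-everywhere
statements into a statement about Lebesgue measure on `ℝ⁴`.
-/

open Matrix Complex Real Kronecker
open scoped ComplexOrder

noncomputable section

/-- A nonzero trigonometric polynomial of degree at most one is real-analytic and nonzero somewhere,
so it vanishes only on a discrete set. -/
lemma ae_trig_ne_zero {a b d : ℂ} (h : ¬(a = 0 ∧ b = 0 ∧ d = 0)) :
    ∀ᵐ t : ℝ, a + b * (Real.cos t : ℂ) + d * (Real.sin t : ℂ) ≠ 0 := by
  set f : ℝ → ℂ := fun t => a + b * (Real.cos t : ℂ) + d * (Real.sin t : ℂ) with hf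
  have han : AnalyticOnNhd ℝ f Set.univ := by
    intro t _
    have h1 : AnalyticAt ℝ (fun t : ℝ => (Real.cos t : ℂ)) t :=
      (Complex.ofRealCLM.analyticAt _).comp Real.analyticAt_cos
    have h2 : AnalyticAt ℝ (fun t : ℝ => (Real.sin t : ℂ)) t :=
      (Complex.ofRealCLM.analyticAt _).comp Real.analyticAt_sin
    exact (analyticAt_const.add (analyticAt_const.mul h1)).add (analyticAt_const.mul h2)
  obtain ⟨x, hx⟩ : ∃ x, f x ≠ 0 := by
    by_contra! hz
    have h0 : a + b = 0 := by simpa [hf] using hz 0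
    have h1 : a - b = 0 := by simpa [hf, sub_eq_add_neg] using hz π
    have h2 : a + d = 0 := by simpa [hf] using hz (π / 2)
    have ha : a = 0 := by linear_combination (h0 + h1) / 2
    exact h ⟨ha, by linear_combination h0 - ha, by linear_combination h2 - ha⟩
  have hcod := han.preimage_zero_mem_codiscrete hx
  have := ae_restrict_le_codiscreteWithin (μ := MeasureTheory.volume)
    MeasurableSet.univ hcod
  rw [MeasureTheory.Measure.restrict_univ] at this
  exact this

lemma exp_I_mul_ofReal (φ : ℝ) :
    Complex.exp (Complex.I * φ) = (Real.cos φ : ℂ) + (Real.sin φ : ℂ) * Complex.I := by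
  rw [mul_comm, Complex.exp_mul_I, Complex.ofReal_cos, Complex.ofReal_sin]

/-- A linear functional on pure-state density matrices, as a trigonometric polynomial of degree one
in each of the two Bloch angles. -/
lemma sum_mul_dm_ψ (c : Matrix (Fin 2) (Fin 2) ℂ) (θ φ : ℝ) :
    ∑ i, ∑ j, c i j * dm (ψ θ φ) i j =
      ((c 0 0 + c 1 1) / 2 + (c 0 0 - c 1 1) / 2 * (Real.cos θ : ℂ) + 0 * (Real.sin θ : ℂ))
        + (c 0 1 + c 1 0) / 2 * (Real.sin θ : ℂ) * (Real.cos φ : ℂ)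
        + Complex.I * (c 1 0 - c 0 1) / 2 * (Real.sin θ : ℂ) * (Real.sin φ : ℂ) := by
  have hc : Real.cos θ = 2 * Real.cos (θ / 2) ^ 2 - 1 := by
    rw [← Real.cos_two_mul]; ring_nf
  have hs : Real.sin θ = 2 * Real.sin (θ / 2) * Real.cos (θ / 2) := by
    rw [← Real.sin_two_mul]; ring_nf
  have h1 : (Real.sin (θ / 2) : ℂ) ^ 2 + (Real.cos (θ / 2) : ℂ) ^ 2 = 1 := by
    exact_mod_cast Real.sin_sq_add_cos_sq (θ / 2)
  have h2 : (Real.sin φ : ℂ) ^ 2 + (Real.cos φ : ℂ) ^ 2 = 1 := by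
    exact_mod_cast Real.sin_sq_add_cos_sq φ
  simp only [Fin.sum_univ_two, dm, Matrix.vecMulVec_apply, ψ, Pi.star_apply, Matrix.cons_val_zero,
    Matrix.cons_val_one, exp_I_mul_ofReal, hc, hs, RCLike.star_def, map_add, map_mul,
    Complex.conj_ofReal, Complex.conj_I]
  push_cast only [Complex.ofReal_sub, Complex.ofReal_mul, Complex.ofReal_pow]
  generalize (Real.sin (θ / 2) : ℂ) = s at *
  generalize (Real.cos (θ / 2) : ℂ) = k at *
  generalize (Real.sin φ : ℂ) = S at *
  generalize (Real.cos φ : ℂ) = K at *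
  push_cast
  linear_combination (c 1 1) * h1 + (c 1 1) * s ^ 2 * h2 - c 1 1 * s ^ 2 * S ^ 2 * Complex.I_sq

/-- A strong form of the fact that pure states span all complex matrices: a nonzero linear
functional is nonzero at almost every pure state. -/
lemma ae_sum_mul_dm_ψ_ne_zero {c : Matrix (Fin 2) (Fin 2) ℂ} (hc : c ≠ 0) :
    ∀ᵐ θ : ℝ, ∀ᵐ φ : ℝ, ∑ i, ∑ j, c i j * dm (ψ θ φ) i j ≠ 0 := by
  simp only [sum_mul_dm_ψ]
  by_cases h : c 0 1 = 0 ∧ c 1 0 = 0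
  · have hd : ¬((c 0 0 + c 1 1) / 2 = 0 ∧ (c 0 0 - c 1 1) / 2 = 0 ∧ (0 : ℂ) = 0) := by
      rintro ⟨h1, h2, -⟩
      apply hc
      have h00 : c 0 0 = 0 := by linear_combination h1 + h2
      have h11 : c 1 1 = 0 := by linear_combination h1 - h2
      ext i j
      fin_cases i <;> fin_cases j <;> simp [h, h00, h11]
    filter_upwards [ae_trig_ne_zero hd] with θ hθ
    filter_upwards with φ
    simpa [h] using hθ
  · have hsin : ∀ᵐ θ : ℝ, (0 : ℂ) + 0 * (Real.cos θ : ℂ) + 1 * (Real.sin θ : ℂ) ≠ 0 :=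
      ae_trig_ne_zero (by simp)
    filter_upwards [hsin] with θ hθ
    have hθ' : (Real.sin θ : ℂ) ≠ 0 := by simpa using hθ
    apply ae_trig_ne_zero
    rintro ⟨-, h1, h2⟩
    have e1 : c 0 1 + c 1 0 = 0 := by simpa [hθ', -Complex.ofReal_sin] using h1
    have e2 : c 1 0 - c 0 1 = 0 := by simpa [hθ', -Complex.ofReal_sin] using h2
    exact h ⟨by linear_combination (e1 - e2) / 2, by linear_combination (e1 + e2) / 2⟩

@[fun_prop]
lemma continuous_dm_ψ {X : Type*} [TopologicalSpace X] {f g : X → ℝ} (hf : Continuous f)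
    (hg : Continuous g) (i j : Fin 2) : Continuous fun x => dm (ψ (f x) (g x)) i j := by
  fin_cases i <;> fin_cases j <;>
    simp only [dm, Matrix.vecMulVec_apply, ψ, Pi.star_apply, Fin.zero_eta, Fin.mk_one,
      Matrix.cons_val_zero, Matrix.cons_val_one] <;> fun_prop

lemma volume_zeros_of_iterated_ae {F : ℝ × ℝ × ℝ × ℝ → ℂ} (hF : Continuous F)
    (h : ∀ᵐ a : ℝ, ∀ᵐ b : ℝ, ∀ᵐ c : ℝ, ∀ᵐ d : ℝ, F (a, b, c, d) ≠ 0) :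
    MeasureTheory.volume {q | F q = 0} = 0 := by
  have hmeas : MeasurableSet {q | F q = 0} := (isClosed_eq hF continuous_const).measurableSet
  refine MeasureTheory.Measure.measure_prod_null_of_ae_null hmeas ?_
  filter_upwards [h] with a ha
  refine MeasureTheory.Measure.measure_prod_null_of_ae_null (measurable_prodMk_left hmeas) ?_
  filter_upwards [ha] with b hb
  refine MeasureTheory.Measure.measure_prod_null_of_ae_null
    (measurable_prodMk_left (measurable_prodMk_left hmeas)) ?_
  filter_upwards [hb] with c hc
  simpa [MeasureTheory.ae_iff] using hc

/-- A nonzero linear functional on two-qubit matrices vanishes at almost no pure product state. -/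
lemma volume_product_zeros {M : Matrix (Fin 2 × Fin 2) (Fin 2 × Fin 2) ℂ} (hM : M ≠ 0) :
    MeasureTheory.volume {q : ℝ × ℝ × ℝ × ℝ |
      ∑ x, ∑ y, M x y * (dm (ψ q.1 q.2.1) ⊗ₖ dm (ψ q.2.2.1 q.2.2.2)) x y = 0} = 0 := by
  -- Contracting with the first state leaves a functional of the second one.
  have hF : ∀ q : ℝ × ℝ × ℝ × ℝ,
      ∑ x, ∑ y, M x y * (dm (ψ q.1 q.2.1) ⊗ₖ dm (ψ q.2.2.1 q.2.2.2)) x y =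
      ∑ k, ∑ l, (∑ i, ∑ j, M (i, k) (j, l) * dm (ψ q.1 q.2.1) i j) *
        dm (ψ q.2.2.1 q.2.2.2) k l := by
    intro q
    simp only [Fintype.sum_prod_type, Fin.sum_univ_two, Matrix.kroneckerMap_apply]
    ring
  simp only [hF]
  obtain ⟨k, l, hkl⟩ : ∃ k l, (Matrix.of fun i j => M (i, k) (j, l)) ≠ 0 := by
    by_contra! hz
    apply hM
    ext ⟨i, k⟩ ⟨j, l⟩
    exact congrFun (congrFun (hz k l) i) j
  refine volume_zeros_of_iterated_ae (by fun_prop) ?_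
  filter_upwards [ae_sum_mul_dm_ψ_ne_zero hkl] with a ha
  filter_upwards [ha] with b hb
  exact ae_sum_mul_dm_ψ_ne_zero
    (c := Matrix.of fun k l => ∑ i, ∑ j, M (i, k) (j, l) * dm (ψ a b) i j)
    fun h0 => hb (congrFun (congrFun h0 k) l)

lemma Ry_mem_unitary (t : ℝ) : Ry t ∈ unitary (Matrix (Fin 2) (Fin 2) ℂ) := by
  have h : (Real.sin (t / 2) : ℂ) ^ 2 + (Real.cos (t / 2) : ℂ) ^ 2 = 1 := by
    exact_mod_cast Real.sin_sq_add_cos_sq (t / 2)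
  rw [← Matrix.unitaryGroup, Matrix.mem_unitaryGroup_iff]
  ext i j
  fin_cases i <;> fin_cases j <;>
    simp [Ry, Matrix.mul_apply, Fin.sum_univ_two, Matrix.star_apply, -Complex.ofReal_cos,
      -Complex.ofReal_sin] <;> first | linear_combination h | ring

lemma Rz_mem_unitary (t : ℝ) : Rz t ∈ unitary (Matrix (Fin 2) (Fin 2) ℂ) := by
  rw [← Matrix.unitaryGroup, Matrix.mem_unitaryGroup_iff]
  ext i j
  fin_cases i <;> fin_cases j <;>
    simp [Rz, Matrix.mul_apply, Fin.sum_univ_two, Matrix.star_apply, ← Complex.exp_conj,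
      ← Complex.exp_add, Complex.conj_ofNat, neg_div]

lemma CNOT12_mem_unitary : CNOT12 ∈ unitary (Matrix (Fin 2 × Fin 2) (Fin 2 × Fin 2) ℂ) := by
  rw [← Matrix.unitaryGroup, Matrix.mem_unitaryGroup_iff]
  ext ⟨i, k⟩ ⟨j, l⟩
  fin_cases i <;> fin_cases k <;> fin_cases j <;> fin_cases l <;>
    simp [CNOT12, Matrix.mul_apply, Fintype.sum_prod_type, Fin.sum_univ_two, Matrix.star_apply]

lemma CNOT21_mem_unitary : CNOT21 ∈ unitary (Matrix (Fin 2 × Fin 2) (Fin 2 × Fin 2) ℂ) := by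
  rw [← Matrix.unitaryGroup, Matrix.mem_unitaryGroup_iff]
  ext ⟨i, k⟩ ⟨j, l⟩
  fin_cases i <;> fin_cases k <;> fin_cases j <;> fin_cases l <;>
    simp [CNOT21, Matrix.mul_apply, Fintype.sum_prod_type, Fin.sum_univ_two, Matrix.star_apply]

lemma Ug_mem_unitary (α β γ μ₁ μ₂ ν₁ ν₂ σ₁ : ℝ) :
    Ug α β γ μ₁ μ₂ ν₁ ν₂ σ₁ ∈ unitary (Matrix (Fin 2 × Fin 2) (Fin 2 × Fin 2) ℂ) := by
  have h1 := Matrix.kronecker_mem_unitary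
    (mul_mem (mul_mem (Rz_mem_unitary σ₁) (Ry_mem_unitary ν₁)) (Rz_mem_unitary μ₁))
    (mul_mem (Ry_mem_unitary ν₂) (Rz_mem_unitary μ₂))
  have h2 := Matrix.kronecker_mem_unitary
    (one_mem (unitary (Matrix (Fin 2) (Fin 2) ℂ))) (Ry_mem_unitary β)
  have h3 := Matrix.kronecker_mem_unitary (Rz_mem_unitary γ) (Ry_mem_unitary α)
  exact mul_mem h1 (mul_mem (mul_mem (mul_mem (mul_mem CNOT21_mem_unitary h2)
    CNOT12_mem_unitary) h3) CNOT21_mem_unitary)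

/-- For a Hermitian matrix, the `xy`-projection of the Bloch vector is twice the off-diagonal
entry, read as a vector of the plane. -/
lemma entry_eq_zero_of_mvec_eq_zero {τ : Matrix (Fin 2) (Fin 2) ℂ} (hτ : τ.IsHermitian)
    (h : mvec τ = 0) : τ 1 0 = 0 := by
  have h0 := congrFun h 0
  have h1 := congrFun h 1
  have hh : star (τ 1 0) = τ 0 1 := hτ.apply 0 1
  simp [mvec, pauliX, pauliY, Matrix.trace, Matrix.vecMul_eq_sum, Fin.sum_univ_two, ← hh] at h0 h1
  apply Complex.ext
  · simp; linarith
  · simp; linarith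

lemma isHermitian_ptrace1 {ρ : Matrix (Fin 2 × Fin 2) (Fin 2 × Fin 2) ℂ} (h : ρ.IsHermitian) :
    (ptrace1 ρ).IsHermitian := by
  ext i j
  simp only [Matrix.conjTranspose_apply, ptrace1, star_sum, h.apply]

/-- The matrix of the functional `ρ ↦ (tr₁ (U ρ U†))₁₀`. -/
def entryFunctional (U : Matrix (Fin 2 × Fin 2) (Fin 2 × Fin 2) ℂ) :
    Matrix (Fin 2 × Fin 2) (Fin 2 × Fin 2) ℂ :=
  fun x y => ∑ k : Fin 2, U (k, 1) x * star (U (k, 0) y)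

lemma ptrace1_conj_apply (U ρ : Matrix (Fin 2 × Fin 2) (Fin 2 × Fin 2) ℂ) :
    ptrace1 (U * ρ * Uᴴ) 1 0 = ∑ x, ∑ y, entryFunctional U x y * ρ x y := by
  simp only [ptrace1, Matrix.mul_apply, Matrix.conjTranspose_apply, entryFunctional,
    Fintype.sum_prod_type, Fin.sum_univ_two]
  ring

/-- Conjugation by a unitary is onto, so the functional takes the value `1` at the preimage of the
matrix unit with row `(0, 1)` and column `(0, 0)`. -/
lemma entryFunctional_ne_zero {U : Matrix (Fin 2 × Fin 2) (Fin 2 × Fin 2) ℂ}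
    (hU : U ∈ unitary (Matrix (Fin 2 × Fin 2) (Fin 2 × Fin 2) ℂ)) : entryFunctional U ≠ 0 := by
  intro h0
  have hUU : U * Uᴴ = 1 := (Unitary.mem_iff.1 hU).2
  have h := ptrace1_conj_apply U (Uᴴ * Matrix.single (0, 1) (0, 0) 1 * U)
  have e : U * (Uᴴ * Matrix.single (0, 1) (0, 0) 1 * U) * Uᴴ =
      (U * Uᴴ) * Matrix.single (0, 1) (0, 0) 1 * (U * Uᴴ) := by
    simp only [Matrix.mul_assoc]
  rw [e, hUU, h0] at h
  simp [ptrace1, Matrix.single_apply] at h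

/-- Appendix Lemma on m₂: for every parameter tuple of U_g, the
set of initial angles for which the second final reduced Bloch vector has
vanishing xy-projection has Lebesgue measure zero. -/
theorem m2_vanishing_measure_zero (α β γ μ₁ μ₂ ν₁ ν₂ σ₁ : ℝ) :
    MeasureTheory.volume {q : ℝ × ℝ × ℝ × ℝ |
      q.1 ∈ Set.Icc 0 π ∧ q.2.1 ∈ Set.Icc 0 (2 * π) ∧
      q.2.2.1 ∈ Set.Icc 0 π ∧ q.2.2.2 ∈ Set.Icc 0 (2 * π) ∧
      mvec (ptrace1 (Ug α β γ μ₁ μ₂ ν₁ ν₂ σ₁ *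
          (dm (ψ q.1 q.2.1) ⊗ₖ dm (ψ q.2.2.1 q.2.2.2)) *
          (Ug α β γ μ₁ μ₂ ν₁ ν₂ σ₁)ᴴ)) = 0} = 0 := by
  refine MeasureTheory.measure_mono_null ?_
    (volume_product_zeros (entryFunctional_ne_zero (Ug_mem_unitary α β γ μ₁ μ₂ ν₁ ν₂ σ₁)))
  rintro q ⟨-, -, -, -, hq⟩
  rw [Set.mem_ofPred_eq, ← ptrace1_conj_apply]
  refine entry_eq_zero_of_mvec_eq_zero (isHermitian_ptrace1 ?_) hq
  have hdm : ∀ v, (dm v)ᴴ = dm v := fun v => by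
    rw [dm, Matrix.conjTranspose_vecMulVec, star_star]
  refine Matrix.isHermitian_mul_mul_conjTranspose _ ?_
  rw [Matrix.IsHermitian, Matrix.conjTranspose_kronecker, hdm, hdm]

end
end
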